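/- If gcd(r, n) = 1, then L_r(x) = x^{q^r} + a x is a permutation polynomial over F_{q^n} if and only if (-1)^n · N(a) ≠ 1 where N(a) = a^{(q^n-1)/(q-1)}; and when this holds, L_r^{-1}(x) = [N(a)/(N(a)+(-1)^{n-1})] · Σ_{i=0}^{n-1} (-1)^i a^{-(q^{(i+1)r}-1)/(q^r-1)} x^{q^{ir}}. -/

import Mathlib

theorem s7_prod {F : Type*} [Field F] (q r m : ℕ) (hq : 2 ≤ q) (hr : 0 < r) (b : F) :
    b ^ ((q ^ (m * r) - 1) / (q ^ r - 1)) = ∏ j ∈ Finset.range m, b ^ q ^ (j * r) := by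
  have h2 : 2 ≤ q ^ r := le_trans hq (Nat.le_self_pow hr.ne' q)
  have h := Nat.geomSum_eq h2 m
  rw [mul_comm m r, pow_mul, ← h, Finset.prod_pow_eq_pow_sum]
  congr 1
  refine Finset.sum_congr rfl fun j _ => ?_
  rw [mul_comm j r, pow_mul]

theorem s7_mod {F : Type*} [Field F] [Fintype F] (q n : ℕ)
    (hF : Fintype.card F = q ^ n) (x : F) (k : ℕ) : x ^ q ^ k = x ^ q ^ (k % n) := by
  conv_lhs => rw [← Nat.mod_add_div k n, pow_add, pow_mul]
  rw [pow_mul q n, ← hF, FiniteField.pow_card_pow]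

theorem s7_norm {F : Type*} [Field F] [Fintype F] (q n r : ℕ) (hn : 0 < n)
    (hco : Nat.gcd r n = 1) (hF : Fintype.card F = q ^ n) (b : F) :
    ∏ j ∈ Finset.range n, b ^ q ^ (j * r) = ∏ j ∈ Finset.range n, b ^ q ^ j := by
  have hinj : Set.InjOn (fun j => j * r % n) (Finset.range n : Set ℕ) := by
    intro i hi j hj h
    have hi' : i < n := by simpa using hi
    have hj' : j < n := by simpa using hj
    have h' : i * r ≡ j * r [MOD n] := h
    have h3 : i ≡ j [MOD n] := Nat.ModEq.cancel_right_of_coprime (by rw [Nat.gcd_comm]; exact hco) h'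
    exact Nat.ModEq.eq_of_lt_of_lt h3 hi' hj'
  have himg : (Finset.range n).image (fun j => j * r % n) = Finset.range n := by
    apply Finset.eq_of_subset_of_card_le
    · intro x hx
      obtain ⟨j, -, rfl⟩ := Finset.mem_image.1 hx
      exact Finset.mem_range.2 (Nat.mod_lt _ hn)
    · rw [Finset.card_image_of_injOn hinj]
  conv_rhs => rw [← himg, Finset.prod_image hinj]
  exact Finset.prod_congr rfl fun j _ => s7_mod q n hF b (j * r)

theorem s7_dvd {F : Type*} [Field F] [Fintype F] (q n d : ℕ) (hq : 2 ≤ q)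
    (hF : Fintype.card F = q ^ n) (h : ∀ x : F, x ^ q ^ d = x) : n ∣ d := by
  classical
  obtain ⟨g, hg⟩ := IsCyclic.exists_generator (α := Fˣ)
  have ho : orderOf g = q ^ n - 1 := by
    rw [orderOf_eq_card_of_forall_mem_zpowers hg, Nat.card_eq_fintype_card, Fintype.card_units, hF]
  have h1 : g ^ (q ^ d - 1) = 1 := by
    have h2 : g ^ q ^ d = g := by
      ext
      simpa using h g
    have h3 : g ^ (q ^ d - 1) * g = 1 * g := by
      rw [← pow_succ, Nat.sub_add_cancel (Nat.one_le_pow _ _ (by omega)), h2, one_mul]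
    exact mul_right_cancel h3
  have h4 : q ^ n - 1 ∣ q ^ d - 1 := ho ▸ orderOf_dvd_of_pow_eq_one h1
  have h5 := Nat.pow_sub_one_gcd_pow_sub_one q n d
  rw [Nat.gcd_eq_left h4] at h5
  have h6 : q ^ n = q ^ Nat.gcd n d := by
    have := Nat.one_le_pow n q (by omega)
    have := Nat.one_le_pow (Nat.gcd n d) q (by omega)
    omega
  have h7 := Nat.pow_right_injective hq h6
  rw [h7]
  exact Nat.gcd_dvd_right n d

theorem s7_add {F : Type*} [Field F] [Fintype F] (q n : ℕ) (hq : IsPrimePow q)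
    (hF : Fintype.card F = q ^ n) (x y : F) (s : ℕ) :
    (x + y) ^ q ^ s = x ^ q ^ s + y ^ q ^ s := by
  obtain ⟨p, k, hp, hk, rfl⟩ := hq
  have := Fact.mk hp.nat_prime
  rw [← pow_mul] at hF
  have : CharP F p := charP_of_card_eq_prime_pow hF
  rw [← pow_mul, add_pow_char_pow]

theorem s7_tele {F : Type*} [Field F] [Fintype F] (q n r : ℕ) (hq : IsPrimePow q)
    (hF : Fintype.card F = q ^ n) (a : F) (ha : a ≠ 0) (x : F) (m : ℕ) :
    ∑ i ∈ Finset.range m, (-1 : F) ^ i * (∏ j ∈ Finset.range (i + 1), a⁻¹ ^ q ^ (j * r)) *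
      (x ^ q ^ r + a * x) ^ q ^ (i * r)
    = x - (-1) ^ m * (∏ j ∈ Finset.range m, a⁻¹ ^ q ^ (j * r)) * x ^ q ^ (m * r) := by
  induction m with
  | zero => simp
  | succ m ih =>
    rw [Finset.sum_range_succ, ih, s7_add q n hq hF, Finset.prod_range_succ, mul_pow, ← pow_mul,
      ← pow_add, show r + m * r = (m + 1) * r by ring]
    have h : a⁻¹ ^ q ^ (m * r) * a ^ q ^ (m * r) = 1 := by
      rw [← mul_pow, inv_mul_cancel₀ ha, one_pow]
    linear_combination ((-1) ^ m * (∏ j ∈ Finset.range m, a⁻¹ ^ q ^ (j * r)) * x ^ q ^ (m * r)) * h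

theorem s7_indep {F : Type*} [Field F] [Fintype F] (q n r : ℕ) (hq : IsPrimePow q) (hn : 0 < n)
    (hco : Nat.gcd r n = 1) (hF : Fintype.card F = q ^ n) (c : ℕ → F)
    (h : ∀ x : F, ∑ i ∈ Finset.range n, c i * x ^ q ^ (i * r) = 0) : c 0 = 0 := by
  have hinj0 : ∀ i j : ℕ, i < j → j < n → ¬ (∀ x : F, x ^ q ^ (i * r) = x ^ q ^ (j * r)) := by
    intro i j hij hj hx
    have hd : n ∣ (j - i) * r := by
      apply s7_dvd (F := F) q n _ hq.two_le hF
      intro x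
      have h0 : q ^ (i * r) ≠ 0 := pow_ne_zero _ (by have := hq.two_le; omega)
      have h1 := hx x
      have h2 : j * r = (j - i) * r + i * r := by
        rw [← add_mul, Nat.sub_add_cancel hij.le]
      rw [h2, pow_add, pow_mul x] at h1
      have h3 := s7_add q n hq hF (x ^ q ^ ((j - i) * r) - x) x (i * r)
      rw [sub_add_cancel, ← h1] at h3
      have h4 : (x ^ q ^ ((j - i) * r) - x) ^ q ^ (i * r) = 0 := by
        linear_combination -h3
      exact sub_eq_zero.1 (pow_eq_zero_iff h0 |>.1 h4)
    have hd2 : n ∣ j - i := Nat.Coprime.dvd_of_dvd_mul_right (by rw [Nat.Coprime, Nat.gcd_comm]; exact hco) hd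
    have := Nat.le_of_dvd (by omega) hd2
    omega
  let φ : Fin n → (F →* F) := fun i => powMonoidHom (q ^ (i.1 * r))
  have hφ : Function.Injective φ := by
    intro i j hij
    have hx : ∀ x : F, x ^ q ^ (i.1 * r) = x ^ q ^ (j.1 * r) := fun x => DFunLike.congr_fun hij x
    rcases lt_trichotomy i.1 j.1 with hl | hl | hl
    · exact absurd hx (hinj0 _ _ hl j.2)
    · exact Fin.ext hl
    · exact absurd (fun x => (hx x).symm) (hinj0 _ _ hl i.2)
  have hli := (linearIndependent_monoidHom F F).comp φ hφ
  rw [Fintype.linearIndependent_iff] at hli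
  refine hli (fun i => c i.1) ?_ ⟨0, hn⟩
  ext x
  have := h x
  rw [← Fin.sum_univ_eq_sum_range (fun i => c i * x ^ q ^ (i * r))] at this
  simpa [φ] using this

/-- If `gcd(r,n) = 1`, then `L_r(x) = x^{q^r} + a x` permutes `F_{q^n}` iff `(-1)^n N(a) ≠ 1`
with `N(a) = a^{(q^n-1)/(q-1)}`; and when this holds,
`L_r⁻¹(x) = [N(a)/(N(a)+(-1)^{n-1})] ∑_{i=0}^{n-1} (-1)^i a^{-(q^{(i+1)r}-1)/(q^r-1)} x^{q^{ir}}`. -/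
theorem stmt_7 (q n r : ℕ) (hq : IsPrimePow q) (hn : 0 < n) (hr : 0 < r)
    (hco : Nat.gcd r n = 1)
    (F : Type*) [Field F] [Fintype F] (hF : Fintype.card F = q ^ n)
    (a : F) (ha : a ≠ 0) (N : F) (hN : N = a ^ ((q ^ n - 1) / (q - 1))) :
    (Function.Bijective (fun x : F => x ^ q ^ r + a * x) ↔ (-1 : F) ^ n * N ≠ 1) ∧
    ((-1 : F) ^ n * N ≠ 1 →
      ∀ x : F,
        (N / (N + (-1) ^ (n - 1)) *
            ∑ i ∈ Finset.range n,
              (-1 : F) ^ i * a⁻¹ ^ ((q ^ ((i + 1) * r) - 1) / (q ^ r - 1)) * x ^ q ^ (i * r))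
              ^ q ^ r
          + a * (N / (N + (-1) ^ (n - 1)) *
            ∑ i ∈ Finset.range n,
              (-1 : F) ^ i * a⁻¹ ^ ((q ^ ((i + 1) * r) - 1) / (q ^ r - 1)) * x ^ q ^ (i * r))
          = x ∧
        N / (N + (-1) ^ (n - 1)) *
            ∑ i ∈ Finset.range n,
              (-1 : F) ^ i * a⁻¹ ^ ((q ^ ((i + 1) * r) - 1) / (q ^ r - 1)) *
                (x ^ q ^ r + a * x) ^ q ^ (i * r)
          = x) := by
  have hq2 := hq.two_le
  have hN' : N = ∏ j ∈ Finset.range n, a ^ q ^ j := by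
    have h := s7_prod q 1 n hq2 one_pos a
    simp only [mul_one, pow_one] at h
    rw [hN, h]
  have hB : (∏ j ∈ Finset.range n, a⁻¹ ^ q ^ (j * r)) = N⁻¹ := by
    rw [s7_norm q n r hn hco hF, hN', ← Finset.prod_inv_distrib]
    simp only [inv_pow]
  have hN0 : N ≠ 0 := by rw [hN]; exact pow_ne_zero _ ha
  have htele : ∀ x : F, ∑ i ∈ Finset.range n,
      (-1 : F) ^ i * a⁻¹ ^ ((q ^ ((i + 1) * r) - 1) / (q ^ r - 1)) *
        (x ^ q ^ r + a * x) ^ q ^ (i * r) = (1 - (-1) ^ n * N⁻¹) * x := by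
    intro x
    have h := s7_tele q n r hq hF a ha x n
    rw [hB, s7_mod q n hF x (n * r), Nat.mul_mod_right, pow_zero, pow_one] at h
    simp only [s7_prod q r _ hq2 hr]
    rw [h]
    ring
  have hsq : (-1 : F) ^ n * (-1) ^ n = 1 := by rw [← mul_pow]; simp
  have hpred : (-1 : F) ^ n = - (-1) ^ (n - 1) := by
    obtain ⟨m, rfl⟩ : ∃ m, n = m + 1 := ⟨n - 1, by omega⟩
    simp [pow_succ]
  have hleft : (-1 : F) ^ n * N ≠ 1 → ∀ x : F, N / (N + (-1) ^ (n - 1)) *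
      ∑ i ∈ Finset.range n, (-1 : F) ^ i * a⁻¹ ^ ((q ^ ((i + 1) * r) - 1) / (q ^ r - 1)) *
        (x ^ q ^ r + a * x) ^ q ^ (i * r) = x := by
    intro hne x
    rw [htele, hpred]
    have hd : N + (-1) ^ (n - 1) ≠ 0 := by
      intro h0
      apply hne
      linear_combination (-1) ^ n * h0 + hsq - (-1) ^ n * hpred
    field_simp
    ring
  have hbij : (-1 : F) ^ n * N ≠ 1 → Function.Bijective (fun x : F => x ^ q ^ r + a * x) := by
    intro hne
    rw [← Finite.injective_iff_bijective]
    intro x y hxy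
    have hxy' : x ^ q ^ r + a * x = y ^ q ^ r + a * y := hxy
    rw [← hleft hne x, hxy', hleft hne y]
  refine ⟨⟨?_, hbij⟩, ?_⟩
  · intro hb h1
    have hz : (1 - (-1) ^ n * N⁻¹ : F) = 0 := by
      have : N = (-1) ^ n := by linear_combination (-1) ^ n * h1 - N * hsq
      rw [← this, mul_inv_cancel₀ hN0, sub_self]
    have h0 := s7_indep q n r hq hn hco hF
      (fun i => (-1 : F) ^ i * a⁻¹ ^ ((q ^ ((i + 1) * r) - 1) / (q ^ r - 1))) (by
        intro y
        obtain ⟨x, rfl⟩ := hb.2 y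
        have := htele x
        rw [hz, zero_mul] at this
        exact this)
    exact mul_ne_zero (pow_ne_zero _ (by simp)) (pow_ne_zero _ (inv_ne_zero ha)) h0
  · intro hne x
    refine ⟨?_, hleft hne x⟩
    obtain ⟨y, rfl⟩ := (hbij hne).2 x
    have := hleft hne y
    simp only [this]
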